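/- arXiv:1506.05780 — 5 statements merged into one kernel-verified Lean document; each statement's English description precedes it below -/
import Mathlib

section
/- Let G be a finite abelian group with identity e and let S ⊆ G satisfy S = S⁻¹, e ∉ S, and |S| = d. If every element of G can be written as a product of at most two elements of S, then |G| ≤ d²/2 + d + 1. -/
/-!
Besides `1` and the `d` elements of `S`, every element of `G` is a nontrivial product `s * t`
with `s, t ∈ S`. Of the `d²` ordered pairs in `S × S`, the `d` pairs `(s, s⁻¹)` have product `1`,
so at most `d² - d` pairs have a nontrivial product. By commutativity such a product is attained
by two distinct ordered pairs `(s, t)`, `(t, s)`, unless it is a square `s * s`; counting each of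
the at most `d` squares once more shows that twice the number of nontrivial products is at most
`(d² - d) + d = d²` (`two_mul_card_products_le`).
-/

open Pointwise

/-- Each nontrivial product is counted at least twice by the nontrivial ordered pairs together
with the diagonal. -/
theorem two_mul_card_products_le {G : Type*} [CommGroup G] [DecidableEq G] (S : Finset G)
    (hinv : ∀ s ∈ S, s⁻¹ ∈ S) :
    2 * (((S ×ˢ S).filter fun p => p.1 * p.2 ≠ 1).image fun p => p.1 * p.2).card
      ≤ S.card ^ 2 := by
  set P := (S ×ˢ S).filter fun p => p.1 * p.2 ≠ 1 with hP
  set T := P.image fun p => p.1 * p.2 with hT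
  set D := S.filter fun s => s * s ≠ 1 with hD
  have hPcard : P.card = ∑ g ∈ T, (P.filter fun p => p.1 * p.2 = g).card :=
    Finset.card_eq_sum_card_fiberwise fun p hp => Finset.mem_image_of_mem _ hp
  have hDcard : D.card = ∑ g ∈ T, (D.filter fun s => s * s = g).card := by
    refine Finset.card_eq_sum_card_fiberwise fun s hs => ?_
    have hs' := Finset.mem_filter.1 (Finset.mem_coe.1 hs)
    exact Finset.mem_image.2 ⟨(s, s), by simp [hP, hs'.1, hs'.2], rfl⟩
  have hfib : T.card * 2 ≤ ∑ g ∈ T,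
      ((P.filter fun p => p.1 * p.2 = g).card + (D.filter fun s => s * s = g).card) := by
    rw [← smul_eq_mul]
    refine Finset.card_nsmul_le_sum _ _ _ fun g hg => ?_
    obtain ⟨⟨s, t⟩, hst, rfl⟩ := Finset.mem_image.1 hg
    have hst' : (s ∈ S ∧ t ∈ S) ∧ s * t ≠ 1 := by simpa [hP] using hst
    obtain ⟨⟨hs, ht⟩, hne⟩ := hst'
    by_cases h : s = t
    · subst h
      have h1 : 0 < (P.filter fun p => p.1 * p.2 = s * s).card :=
        Finset.card_pos.2 ⟨(s, s), Finset.mem_filter.2 ⟨hst, rfl⟩⟩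
      have h2 : 0 < (D.filter fun x => x * x = s * s).card :=
        Finset.card_pos.2 ⟨s, Finset.mem_filter.2 ⟨Finset.mem_filter.2 ⟨hs, hne⟩, rfl⟩⟩
      dsimp only
      omega
    · have h1 : 1 < (P.filter fun p => p.1 * p.2 = s * t).card := by
        refine Finset.one_lt_card.2 ⟨(s, t), Finset.mem_filter.2 ⟨hst, rfl⟩, (t, s), ?_, ?_⟩
        · simp [hP, hs, ht, mul_comm t s, hne]
        · simp [h]
      dsimp only
      omega
  rw [Finset.sum_add_distrib, ← hPcard, ← hDcard] at hfib
  have hDle : D.card ≤ S.card := Finset.card_filter_le _ _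
  have hsplit : ((S ×ˢ S).filter fun p => p.1 * p.2 = 1).card + P.card = S.card * S.card := by
    rw [← Finset.card_product]
    exact Finset.card_filter_add_card_filter_not _
  have hone : S.card ≤ ((S ×ˢ S).filter fun p => p.1 * p.2 = 1).card := by
    refine Finset.card_le_card_of_injOn (fun s => (s, s⁻¹)) (fun s hs => ?_) ?_
    · have hs' : s ∈ S := hs
      simp [hs', hinv s hs']
    · intro a _ b _ h
      exact (Prod.mk.inj h).1
  rw [sq]
  omega

/-- Let `G` be a finite abelian group with identity `e` and let `S ⊆ G`
satisfy `S = S⁻¹`, `e ∉ S`, and `|S| = d`. If every element of `G` can be written as a product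
of at most two elements of `S`, then `|G| ≤ d²/2 + d + 1`. -/
theorem card_le_of_diameter_two_abelian {G : Type*} [CommGroup G] [Fintype G]
    (S : Finset G) (d : ℕ)
    (hSsymm : (S : Set G)⁻¹ = (S : Set G)) (hSone : (1 : G) ∉ S)
    (hSd : S.card = d)
    (hcover : ∀ g : G, ∃ l : List G, l.length ≤ 2 ∧ (∀ x ∈ l, x ∈ S) ∧ l.prod = g) :
    (Fintype.card G : ℚ) ≤ (d : ℚ) ^ 2 / 2 + d + 1 := by
  classical
  have hinv : ∀ s ∈ S, s⁻¹ ∈ S := fun s hs => by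
    have h : s⁻¹ ∈ (S : Set G)⁻¹ := by simpa using hs
    rw [hSsymm] at h
    exact h
  have key := two_mul_card_products_le S hinv
  set T := ((S ×ˢ S).filter fun p => p.1 * p.2 ≠ 1).image fun p => p.1 * p.2 with hT
  have hsub : (Finset.univ : Finset G) ⊆ insert 1 (S ∪ T) := by
    intro g _
    rw [Finset.mem_insert, Finset.mem_union]
    by_cases hg : g = 1
    · exact Or.inl hg
    obtain ⟨l, hl, hlS, rfl⟩ := hcover g
    match l, hl with
    | [], _ => simp at hg
    | [a], _ => exact Or.inr (Or.inl (by simpa using hlS))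
    | [a, b], _ =>
      refine Or.inr (Or.inr (Finset.mem_image.2 ⟨(a, b), ?_, by simp⟩))
      have h1 := hlS a (by simp)
      have h2 := hlS b (by simp)
      simpa [h1, h2] using hg
    | _ :: _ :: _ :: _, h => simp at h
  have hcard : Fintype.card G ≤ S.card + T.card + 1 :=
    (Finset.card_le_card hsub).trans ((Finset.card_insert_le _ _).trans
      (Nat.add_le_add_right (Finset.card_union_le _ _) 1))
  subst hSd
  have key' : (2 : ℚ) * T.card ≤ (S.card : ℚ) ^ 2 := by exact_mod_cast key
  have hcard' : (Fintype.card G : ℚ) ≤ S.card + T.card + 1 := by exact_mod_cast hcard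
  linarith
end

section
/- Let q be a prime power, let G be the multiplicative group F_q^* × F_q^*, and let D = {(x, 1−x) : x ∈ F_q, x ≠ 0, x ≠ 1}. Set N₁ = F_q^* × {1}, N₂ = {1} × F_q^*, and N₃ = {(x,x) : x ∈ F_q^*}. Then for every (a,b) ∈ G with a ≠ 1, b ≠ 1, and a ≠ b, there is exactly one ordered pair (d₁,d₂) ∈ D×D with d₁ ≠ d₂ and d₁·d₂⁻¹ = (a,b); and for every (a,b) ∈ (N₁ ∪ N₂ ∪ N₃) with (a,b) ≠ (1,1) there is no such pair. In other words, D is a ((q−1)²; q−1, q−1, q−1; q−2, 1; 0, 0, 0)-generalized difference set in G relative to N₁, N₂, N₃. -/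
/-!
If `d₂ = (x, y)` and `d₁ * d₂⁻¹ = (a, b)`, then `d₁ = (a x, b y)`, so the pairs `(d₁, d₂)` in
`D × D` with quotient `(a, b)` correspond to the solutions in units of the linear system
`x + y = 1`, `a x + b y = 1`. For `a ≠ b` its only solution in the field is
`x = (1 - b) / (a - b)`, `y = (a - 1) / (a - b)`, and both coordinates are nonzero exactly when
`a ≠ 1` and `b ≠ 1`. For `a = b` the system forces `a = 1`. The size of `D` comes from projecting
to the first coordinate, which is a bijection onto the field without `0` and `1`.
-/

/-- Pairs in `D × D` with quotient `g` amount to unit solutions `p.2` of a linear system. -/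
lemma mul_inv_eq_iff_system {F : Type*} [Field F] (p : (Fˣ × Fˣ) × (Fˣ × Fˣ)) (g : Fˣ × Fˣ) :
    (((p.1.1 : F) + p.1.2 = 1 ∧ (p.2.1 : F) + p.2.2 = 1) ∧ p.1 * p.2⁻¹ = g) ↔
      p.1 = g * p.2 ∧ (p.2.1 : F) + p.2.2 = 1 ∧ (g.1 : F) * p.2.1 + g.2 * p.2.2 = 1 := by
  rw [mul_inv_eq_iff_eq_mul]
  constructor
  · rintro ⟨⟨h1, h2⟩, h⟩
    rw [h] at h1
    exact ⟨h, h2, by simpa using h1⟩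
  · rintro ⟨h, h2, h1⟩
    exact ⟨⟨by rw [h]; simpa using h1, h2⟩, h⟩

/-- Let `q` be a prime power, `G = F_q^* × F_q^*`, and
`D = {(x, 1−x) : x ∈ F_q, x ≠ 0, 1}`. With `N₁ = F_q^* × {1}`, `N₂ = {1} × F_q^*` and
`N₃ = {(x,x)}`, every `(a,b) ∈ G` with `a ≠ 1`, `b ≠ 1`, `a ≠ b` arises exactly once as
`d₁·d₂⁻¹` with `d₁ ≠ d₂` in `D`, and no nonidentity element of `N₁ ∪ N₂ ∪ N₃` so arises;
i.e. `D` is a `((q−1)²; q−1,q−1,q−1; q−2, 1; 0,0,0)`-generalized difference set. -/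
theorem neofield_gds {F : Type*} [Field F] [Fintype F] [DecidableEq F]
    (q : ℕ) (hq : Fintype.card F = q)
    (D : Finset (Fˣ × Fˣ))
    (hD : D = Finset.univ.filter (fun p : Fˣ × Fˣ => (p.1 : F) + (p.2 : F) = 1)) :
    D.card = q - 2 ∧
    (∀ g : Fˣ × Fˣ, g.1 ≠ 1 → g.2 ≠ 1 → g.1 ≠ g.2 →
      ((D ×ˢ D).filter (fun p => p.1 ≠ p.2 ∧ p.1 * p.2⁻¹ = g)).card = 1) ∧
    (∀ g : Fˣ × Fˣ, (g.2 = 1 ∨ g.1 = 1 ∨ g.1 = g.2) → g ≠ 1 →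
      ((D ×ˢ D).filter (fun p => p.1 ≠ p.2 ∧ p.1 * p.2⁻¹ = g)).card = 0) := by
  subst hq hD
  refine ⟨?_, ?_, ?_⟩
  · rw [← Finset.card_image_of_injOn (f := fun p : Fˣ × Fˣ => (p.1 : F))]
    · have himage : (Finset.univ.filter
          (fun p : Fˣ × Fˣ => (p.1 : F) + (p.2 : F) = 1)).image (fun p => (p.1 : F))
          = Finset.univ \ {0, 1} := by
        ext x
        simp only [Finset.mem_image, Finset.mem_filter, Finset.mem_univ, true_and,
          Finset.mem_sdiff, Finset.mem_insert, Finset.mem_singleton, not_or]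
        constructor
        · rintro ⟨⟨u, v⟩, h, rfl⟩
          refine ⟨u.ne_zero, fun h1 => v.ne_zero ?_⟩
          simp only at h h1
          linear_combination h - h1
        · rintro ⟨h0, h1⟩
          exact ⟨(Units.mk0 x h0, Units.mk0 (1 - x) (sub_ne_zero.2 (Ne.symm h1))), by simp, rfl⟩
      rw [himage, Finset.card_sdiff_of_subset (Finset.subset_univ _),
        Finset.card_pair zero_ne_one, Finset.card_univ]
    · rintro ⟨u, v⟩ h ⟨u', v'⟩ h' huu
      simp only [Finset.coe_filter, Finset.mem_univ, true_and, Set.mem_ofPred_eq] at h h' huu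
      ext
      · exact huu
      · simp only
        linear_combination h - h' - huu
  · rintro ⟨a, b⟩ ha hb hab
    have ha' : (a : F) - 1 ≠ 0 := sub_ne_zero.2 (fun h => ha (Units.ext h))
    have hb' : 1 - (b : F) ≠ 0 := sub_ne_zero.2 (fun h => hb (Units.ext h.symm))
    have hab' : (a : F) - b ≠ 0 := sub_ne_zero.2 (fun h => hab (Units.ext h))
    -- the solution of `x + y = 1`, `a x + b y = 1` from the Cramer formula
    let s : Fˣ × Fˣ := (Units.mk0 ((1 - b) / (a - b)) (div_ne_zero hb' hab'),
      Units.mk0 ((a - 1) / (a - b)) (div_ne_zero ha' hab'))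
    rw [Finset.card_eq_one]
    refine ⟨((a, b) * s, s), ?_⟩
    ext p
    simp only [Finset.mem_filter, Finset.mem_product, Finset.mem_univ, true_and,
      Finset.mem_singleton]
    constructor
    · rintro ⟨hD, -, hp⟩
      obtain ⟨h1, h2, h3⟩ := (mul_inv_eq_iff_system p (a, b)).1 ⟨hD, hp⟩
      have hs : p.2 = s := by
        ext
        · simp only [s, Units.val_mk0]
          rw [eq_div_iff hab']
          linear_combination h3 - b * h2
        · simp only [s, Units.val_mk0]
          rw [eq_div_iff hab']
          linear_combination a * h2 - h3
      exact Prod.ext (by rw [h1, hs]) hs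
    · rintro rfl
      obtain ⟨hD, hp⟩ := (mul_inv_eq_iff_system ((a, b) * s, s) (a, b)).2
        ⟨rfl, by simp only [s, Units.val_mk0]; field_simp; ring,
          by simp only [s, Units.val_mk0]; field_simp; ring⟩
      refine ⟨hD, fun h => ha ?_, hp⟩
      simpa using congrArg Prod.fst h
  · rintro ⟨a, b⟩ hg hne
    rw [Finset.card_eq_zero, Finset.filter_eq_empty_iff]
    rintro p hp ⟨-, hpg⟩
    simp only [Finset.mem_filter, Finset.mem_product, Finset.mem_univ, true_and] at hp
    obtain ⟨-, h2, h3⟩ := (mul_inv_eq_iff_system p (a, b)).1 ⟨hp, hpg⟩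
    simp only at hg h3
    apply hne
    rcases hg with rfl | rfl | rfl
    · have : a = 1 := Units.ext <| mul_right_cancel₀ p.2.1.ne_zero <| by
        push_cast at h3 ⊢
        linear_combination h3 - h2
      rw [this]; rfl
    · have : b = 1 := Units.ext <| mul_right_cancel₀ p.2.2.ne_zero <| by
        push_cast at h3 ⊢
        linear_combination h3 - h2
      rw [this]; rfl
    · have : a = 1 := Units.ext <| by
        push_cast
        linear_combination h3 - a * h2
      rw [this]; rfl
end

section
/- Let q be a prime power, G = F_q^* × F_q^*, D = {(x, 1−x) : x ∈ F_q, x ≠ 0, x ≠ 1}, N₁ = F_q^* × {1}, and N₂ = {1} × F_q^*. Then for i = 1, 2: every element (a,b) ∈ G ∖ N_i has exactly one representation as (a,b) = d·n with d ∈ D and n ∈ N_i, exactly one representation as (a,b) = d⁻¹·n with d ∈ D and n ∈ N_i, and no element of N_i has any such representation. Equivalently, in the group ring Z[G], D·N_i = D^{(-1)}·N_i = G − N_i for i = 1, 2. -/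
/-!
Each `N_i` is the kernel of a coordinate projection `φ : G → Fˣ`. Since `x + y = 1` determines
either coordinate from the other, `φ` maps `D` bijectively onto `Fˣ ∖ {1}`, and hence so does
`d ↦ φ (d⁻¹)`. So `D` and `D⁽⁻¹⁾` each contain exactly one element in every coset of `N_i` other
than `N_i` itself, and none in `N_i`, which is the claim (`card_reps_eq_one` and
`card_reps_eq_zero`).
-/

/-- If exactly one `d ∈ D` has `e d` in the coset `g N`, where `N = ker φ`, then `g` has exactly
one representation `e d * n`. The map `e` is the identity or the inversion in the application. -/
lemma card_reps_eq_one {G H : Type*} [Group G] [Group H] [DecidableEq G] (φ : G →* H) (e : G → G)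
    (D N : Finset G) (hN : ∀ n, n ∈ N ↔ φ n = 1) (g : G)
    (hD : ∃! d, d ∈ D ∧ φ (e d) = φ g) :
    ((D ×ˢ N).filter (fun p => e p.1 * p.2 = g)).card = 1 := by
  obtain ⟨d, ⟨hd, hdg⟩, huniq⟩ := hD
  rw [Finset.card_eq_one]
  refine ⟨(d, (e d)⁻¹ * g), ?_⟩
  ext ⟨x, n⟩
  simp only [Finset.mem_filter, Finset.mem_product, Finset.mem_singleton, Prod.mk.injEq, hN]
  constructor
  · rintro ⟨⟨hx, hn⟩, rfl⟩
    obtain rfl := huniq x ⟨hx, by simp [hn]⟩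
    simp
  · rintro ⟨rfl, rfl⟩
    simp [hd, hdg]

lemma card_reps_eq_zero {G H : Type*} [Group G] [Group H] [DecidableEq G] (φ : G →* H) (e : G → G)
    (D N : Finset G) (hN : ∀ n, n ∈ N ↔ φ n = 1) (hD : ∀ d ∈ D, φ (e d) ≠ 1) (g : G)
    (hg : g ∈ N) :
    ((D ×ˢ N).filter (fun p => e p.1 * p.2 = g)).card = 0 := by
  rw [Finset.card_eq_zero, Finset.filter_eq_empty_iff]
  rintro ⟨d, n⟩ hp rfl
  rw [Finset.mem_product, hN] at hp
  rw [hN, map_mul, hp.2, mul_one] at hg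
  exact hD d hp.1 hg

/-- The four counts for a single kernel `N = ker φ`, when `φ` maps `D` bijectively onto
`H ∖ {1}`. -/
lemma card_reps_of_bij {G H : Type*} [Group G] [Group H] [DecidableEq G] (φ : G →* H)
    (D N : Finset G) (hN : ∀ n, n ∈ N ↔ φ n = 1) (hD : ∀ d ∈ D, φ d ≠ 1)
    (hbij : ∀ h : H, h ≠ 1 → ∃! d, d ∈ D ∧ φ d = h) :
    (∀ g : G, g ∉ N →
      ((D ×ˢ N).filter (fun p => p.1 * p.2 = g)).card = 1 ∧
      ((D ×ˢ N).filter (fun p => p.1⁻¹ * p.2 = g)).card = 1) ∧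
    (∀ g : G, g ∈ N →
      ((D ×ˢ N).filter (fun p => p.1 * p.2 = g)).card = 0 ∧
      ((D ×ˢ N).filter (fun p => p.1⁻¹ * p.2 = g)).card = 0) := by
  refine ⟨fun g hg => ?_, fun g hg => ?_⟩
  · rw [hN] at hg
    refine ⟨card_reps_eq_one φ id D N hN g (hbij _ hg),
      card_reps_eq_one φ (fun d => d⁻¹) D N hN g ?_⟩
    simpa only [map_inv, inv_eq_iff_eq_inv] using hbij (φ g)⁻¹ (inv_ne_one.mpr hg)
  · exact ⟨card_reps_eq_zero φ id D N hN hD g hg,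
      card_reps_eq_zero φ (fun d => d⁻¹) D N hN (fun d hd => by simpa using hD d hd) g hg⟩

/-- Let `q` be a prime power, `G = F_q^* × F_q^*`,
`D = {(x, 1−x) : x ∈ F_q, x ≠ 0, 1}`, `N₁ = F_q^* × {1}` and `N₂ = {1} × F_q^*`.
Then for `i = 1, 2`: every `(a,b) ∈ G ∖ N_i` has exactly one representation as `d·n` and
exactly one as `d⁻¹·n` with `d ∈ D`, `n ∈ N_i`, and no element of `N_i` has such a
representation; i.e., in `ℤ[G]`, `D·N_i = D⁽⁻¹⁾·N_i = G − N_i` for `i = 1, 2`. -/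
theorem neofield_DN12 {F : Type*} [Field F] [Fintype F] [DecidableEq F]
    (q : ℕ) (hq : Fintype.card F = q)
    (D N₁ N₂ : Finset (Fˣ × Fˣ))
    (hD : D = Finset.univ.filter (fun p : Fˣ × Fˣ => (p.1 : F) + (p.2 : F) = 1))
    (hN₁ : N₁ = Finset.univ.filter (fun p : Fˣ × Fˣ => p.2 = 1))
    (hN₂ : N₂ = Finset.univ.filter (fun p : Fˣ × Fˣ => p.1 = 1)) :
    ∀ N : Finset (Fˣ × Fˣ), N = N₁ ∨ N = N₂ →
      (∀ g : Fˣ × Fˣ, g ∉ N →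
        ((D ×ˢ N).filter (fun p => p.1 * p.2 = g)).card = 1 ∧
        ((D ×ˢ N).filter (fun p => p.1⁻¹ * p.2 = g)).card = 1) ∧
      (∀ g : Fˣ × Fˣ, g ∈ N →
        ((D ×ˢ N).filter (fun p => p.1 * p.2 = g)).card = 0 ∧
        ((D ×ˢ N).filter (fun p => p.1⁻¹ * p.2 = g)).card = 0) := by
  rintro N (rfl | rfl)
  · refine card_reps_of_bij (MonoidHom.snd Fˣ Fˣ) D N (by simp [hN₁]) ?_ ?_
    · rintro ⟨x, y⟩ hd (rfl : y = 1)
      simp [hD] at hd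
    · intro h hh
      have hne : (1 - h : F) ≠ 0 := fun h0 => hh (Units.ext (sub_eq_zero.mp h0).symm)
      refine ⟨(Units.mk0 _ hne, h), by simp [hD], ?_⟩
      rintro ⟨x, y⟩ ⟨hd, rfl : y = h⟩
      simp only [hD, Finset.mem_filter, Finset.mem_univ, true_and] at hd
      exact Prod.ext (Units.ext (eq_sub_of_add_eq hd)) rfl
  · refine card_reps_of_bij (MonoidHom.fst Fˣ Fˣ) D N (by simp [hN₂]) ?_ ?_
    · rintro ⟨x, y⟩ hd (rfl : x = 1)
      simp [hD] at hd
    · intro h hh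
      have hne : (1 - h : F) ≠ 0 := fun h0 => hh (Units.ext (sub_eq_zero.mp h0).symm)
      refine ⟨(h, Units.mk0 _ hne), by simp [hD], ?_⟩
      rintro ⟨x, y⟩ ⟨hd, rfl : x = h⟩
      simp only [hD, Finset.mem_filter, Finset.mem_univ, true_and] at hd
      exact Prod.ext rfl (Units.ext (eq_sub_of_add_eq' hd))
end

section
/- Let q be a prime power, G = F_q^* × F_q^*, D = {(x, 1−x) : x ∈ F_q, x ≠ 0, x ≠ 1}, and N₃ = {(x,x) : x ∈ F_q^*}. Then every element (a,b) ∈ G with b ≠ −a has exactly one representation as (a,b) = d·n with d ∈ D and n ∈ N₃, exactly one representation as (a,b) = d⁻¹·n with d ∈ D and n ∈ N₃, and the elements (x,−x) with x ∈ F_q^* have no such representation. Equivalently, in the group ring Z[G], D·N₃ = D^{(-1)}·N₃ = G − {(x,−x) : x ∈ F_q^*}. In particular D·N₃ = G − N₃ if and only if q is even. -/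
/-!
Writing `g = (a, b)` and `n = (c, c)`, an equation `g = d * n` with `d = (x, y)`, `x + y = 1`,
forces `c = x * c + y * c = a + b`. So there is no solution when `a + b = 0`, and otherwise the
unique one is `d = (a / (a + b), b / (a + b))`, `c = a + b` (`card_mul_eq_one`, `card_mul_eq_zero`).
The equation `g = d⁻¹ * n` is `g⁻¹ = d * n⁻¹`, so the map `n ↦ n⁻¹` of the diagonal reduces it to
the first case for `g⁻¹`, and `a⁻¹ + b⁻¹ = 0` iff `a + b = 0`.

The excluded set `{(x, -x)}` is the diagonal exactly when `-1 = 1` in `F`, that is, when the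
characteristic is two.
-/

/-- The set `{(x, 1 - x) : x ≠ 0, 1}`, as the pairs of units with sum one. -/
def lineSet (F : Type*) [Field F] [Fintype F] [DecidableEq F] : Finset (Fˣ × Fˣ) :=
  Finset.univ.filter (fun p : Fˣ × Fˣ => (p.1 : F) + (p.2 : F) = 1)

/-- The diagonal subgroup `{(x, x)}` of `Fˣ × Fˣ`, as a finset. -/
def diagSet (F : Type*) [Field F] [Fintype F] [DecidableEq F] : Finset (Fˣ × Fˣ) :=
  Finset.univ.filter (fun p : Fˣ × Fˣ => p.1 = p.2)

section
variable {F : Type*} [Field F] [Fintype F] [DecidableEq F]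

/-- The diagonal factor of a representation `d * n = g` is the sum of the coordinates of `g`. -/
lemma diag_eq_add {d n g : Fˣ × Fˣ} (hd : d ∈ lineSet F) (hn : n ∈ diagSet F) (h : d * n = g) :
    (n.1 : F) = g.1 + g.2 := by
  simp only [lineSet, diagSet, Finset.mem_filter, Finset.mem_univ, true_and] at hd hn
  subst h
  simp only [Prod.fst_mul, Prod.snd_mul, Units.val_mul, ← hn]
  linear_combination -(n.1 : F) * hd

lemma card_mul_eq_zero (g : Fˣ × Fˣ) (hg : (g.2 : F) = -(g.1 : F)) :
    ((lineSet F ×ˢ diagSet F).filter (fun p => p.1 * p.2 = g)).card = 0 := by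
  rw [Finset.card_eq_zero, Finset.filter_eq_empty_iff]
  intro p hp h
  rw [Finset.mem_product] at hp
  have := diag_eq_add hp.1 hp.2 h
  rw [hg, add_neg_cancel] at this
  exact p.2.1.ne_zero this

lemma card_mul_eq_one (g : Fˣ × Fˣ) (hg : (g.2 : F) ≠ -(g.1 : F)) :
    ((lineSet F ×ˢ diagSet F).filter (fun p => p.1 * p.2 = g)).card = 1 := by
  have hs : (g.1 : F) + g.2 ≠ 0 := fun h => hg (eq_neg_of_add_eq_zero_right h)
  obtain ⟨s, hs'⟩ : ∃ s : Fˣ, (s : F) = g.1 + g.2 := ⟨Units.mk0 _ hs, rfl⟩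
  rw [Finset.card_eq_one]
  refine ⟨(g * (s, s)⁻¹, (s, s)), ?_⟩
  ext ⟨d, n⟩
  simp only [Finset.mem_filter, Finset.mem_product, Finset.mem_singleton, Prod.mk.injEq]
  constructor
  · rintro ⟨⟨hd, hn⟩, h⟩
    have h1 : n.1 = s := Units.ext ((diag_eq_add hd hn h).trans hs'.symm)
    have hn' : n = (s, s) := by
      simp only [diagSet, Finset.mem_filter, Finset.mem_univ, true_and] at hn
      exact Prod.ext h1 (hn ▸ h1)
    exact ⟨by rw [← h, hn', mul_inv_cancel_right], hn'⟩
  · rintro ⟨rfl, rfl⟩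
    refine ⟨⟨?_, by simp [diagSet]⟩, inv_mul_cancel_right g (s, s)⟩
    simp only [lineSet, Finset.mem_filter, Finset.mem_univ, true_and, Prod.fst_mul, Prod.snd_mul,
      Prod.fst_inv, Prod.snd_inv, Units.val_mul]
    rw [← add_mul, ← hs', Units.mul_inv]

lemma card_inv_mul (g : Fˣ × Fˣ) :
    ((lineSet F ×ˢ diagSet F).filter (fun p => p.1⁻¹ * p.2 = g)).card =
      ((lineSet F ×ˢ diagSet F).filter (fun p => p.1 * p.2 = g⁻¹)).card := by
  have key : ∀ d n g : Fˣ × Fˣ, d⁻¹ * n = g ↔ d * n⁻¹ = g⁻¹ := fun d n g => by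
    rw [← inv_inj, mul_inv, inv_inv]
  refine Finset.card_bij' (fun p _ => (p.1, p.2⁻¹)) (fun p _ => (p.1, p.2⁻¹)) ?_ ?_ ?_ ?_
  · rintro ⟨d, n⟩ h
    simpa [diagSet, key] using h
  · rintro ⟨d, n⟩ h
    simpa [diagSet, key] using h
  · simp
  · simp

lemma inv_snd_eq_neg_iff {F : Type*} [Field F] (g : Fˣ × Fˣ) :
    ((g⁻¹).2 : F) = -((g⁻¹).1 : F) ↔ (g.2 : F) = -(g.1 : F) := by
  rw [Prod.fst_inv, Prod.snd_inv, Units.val_inv_eq_inv_val, Units.val_inv_eq_inv_val, ← inv_neg,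
    inv_inj]

lemma even_card_iff_neg_one {F : Type*} [Field F] [Fintype F] :
    Even (Fintype.card F) ↔ (1 : F) = -1 := by
  rw [Nat.even_iff, ← FiniteField.even_card_iff_char_two]
  constructor
  · intro h
    have : CharP F 2 := ringChar.of_eq h
    exact (CharTwo.neg_eq 1).symm
  · intro h
    by_contra h1
    exact Ring.neg_one_ne_one_of_char_ne_two h1 h.symm

end

/-- Let `q` be a prime power, `G = F_q^* × F_q^*`,
`D = {(x, 1−x) : x ∈ F_q, x ≠ 0, 1}`, and `N₃ = {(x,x) : x ∈ F_q^*}`.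
Every `(a,b) ∈ G` with `b ≠ −a` has exactly one representation as `d·n` and exactly one as
`d⁻¹·n` with `d ∈ D`, `n ∈ N₃`, while the elements `(x,−x)` have none; i.e., in `ℤ[G]`,
`D·N₃ = D⁽⁻¹⁾·N₃ = G − {(x,−x) : x ∈ F_q^*}`. In particular `D·N₃ = G − N₃` if and only
if `q` is even. -/
theorem neofield_DN3 {F : Type*} [Field F] [Fintype F] [DecidableEq F]
    (q : ℕ) (hq : Fintype.card F = q)
    (D N₃ : Finset (Fˣ × Fˣ))
    (hD : D = Finset.univ.filter (fun p : Fˣ × Fˣ => (p.1 : F) + (p.2 : F) = 1))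
    (hN₃ : N₃ = Finset.univ.filter (fun p : Fˣ × Fˣ => p.1 = p.2)) :
    (∀ g : Fˣ × Fˣ, (g.2 : F) ≠ -(g.1 : F) →
      ((D ×ˢ N₃).filter (fun p => p.1 * p.2 = g)).card = 1 ∧
      ((D ×ˢ N₃).filter (fun p => p.1⁻¹ * p.2 = g)).card = 1) ∧
    (∀ g : Fˣ × Fˣ, (g.2 : F) = -(g.1 : F) →
      ((D ×ˢ N₃).filter (fun p => p.1 * p.2 = g)).card = 0 ∧
      ((D ×ˢ N₃).filter (fun p => p.1⁻¹ * p.2 = g)).card = 0) ∧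
    ((∀ g : Fˣ × Fˣ,
        ((D ×ˢ N₃).filter (fun p => p.1 * p.2 = g)).card = if g ∈ N₃ then 0 else 1) ↔
      Even q) := by
  obtain rfl : D = lineSet F := hD
  obtain rfl : N₃ = diagSet F := hN₃
  subst hq
  refine ⟨fun g hg => ⟨card_mul_eq_one g hg, ?_⟩, fun g hg => ⟨card_mul_eq_zero g hg, ?_⟩, ?_⟩
  · rw [card_inv_mul]
    exact card_mul_eq_one _ (mt (inv_snd_eq_neg_iff g).1 hg)
  · rw [card_inv_mul]
    exact card_mul_eq_zero _ ((inv_snd_eq_neg_iff g).2 hg)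
  rw [even_card_iff_neg_one]
  constructor
  · intro h
    by_contra h1
    -- The element `(1, 1)` is diagonal, but has a representation unless `1 = -1`.
    have h2 := h (1, 1)
    rw [card_mul_eq_one (1, 1) (by simpa using h1)] at h2
    simp [diagSet] at h2
  · intro h g
    have hneg : -(g.1 : F) = g.1 := by linear_combination -(g.1 : F) * h
    have hmem : g ∈ diagSet F ↔ (g.2 : F) = -(g.1 : F) := by
      rw [hneg, Units.val_inj]
      simp [diagSet, eq_comm]
    split_ifs with hg
    · exact card_mul_eq_zero g (hmem.1 hg)
    · exact card_mul_eq_one g (mt hmem.2 hg)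
end

section
/- For all sufficiently large integers d, there exist a finite abelian group G with |G| ≥ (25/64)d² − 2.1·d^{1.525} and a subset S ⊆ G with S = S⁻¹, identity ∉ S, |S| = d, such that every element of G can be written as a product of at most two elements of S. In other words, AC(d,2) ≥ (25/64)d² − 2.1·d^{1.525} for all sufficiently large d. -/
/-!
The bound is obtained without any input on primes in short intervals, by lifting one fixed finite
configuration whose ratio `|G₀| / d₀²` exceeds `25/64`.

*Lifting by lines.* Let `e : I → G₀` be a finite family in an abelian group, each `i` carrying an
integer direction `L i ∈ ℤ²`, such that the family is closed under negation (with the same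
direction) and every `g ∈ G₀` is `e i + e j` for some `i, j` whose directions are linearly
independent. In `G₀ × (ℤ/m)²` let `S` consist of all `(e i, t • L i)`. If all the relevant
determinants are units mod `m`, then `S + S` is everything, since two lines with unit determinant
span `(ℤ/m)²`. Here `|S| ≤ |I| m` and the group has order `|G₀| m²`. The determinants are bounded
by `32`, so any `m ≡ 1 mod 32!` works; such `m` have bounded gaps, so that every large `d` is
reached with a loss of `O(d)` only (`lineSet`, `exists_add_lineSet`).

*The base configuration.* Let `F` be the field with `32` elements, `W` the group of Witt vectors of
length two over `F`, and `G₀ = ℤ/4 × W`, of order `4096`. The family has `3 * 32 + 2 = 98` members: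
`P x = (1, (x, 0))`, `N x = -P x`, `V b = (2, (0, b))`, and `0` twice. The cosets `±1` are covered
by `P + V` and `N + V`, the coset `0` by `P + N`, `V + V` and `0 + 0`, and the coset `2` by `P + P`,
`N + N` and `V + 0`. For the last one, `(2, (a, b))` with `a ≠ 0` lies in `P + P` iff `b / a²` has the
form `t² + t`, and in `N + N` iff `b / a² + 1` does; one of the two holds because `32` is an odd power
of `2` (`exists_artinSchreier`). Since `4096 / 98² > 25 / 64`, the conclusion follows for all
large `d`, after padding the generating set to size exactly `d` (`exists_padding`).
-/

open Pointwise

namespace AbelianCayley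

/-! ### Witt vectors of length two -/

/-- Witt vectors of length two over a field of characteristic two. -/
@[ext] structure Witt2 (F : Type) where
  /-- The residue coordinate. -/
  a : F
  /-- The second Witt coordinate. -/
  b : F

variable {F : Type}

namespace Witt2

/-- The underlying set of `Witt2 F` is `F × F`. -/
def equivProd : Witt2 F ≃ F × F where
  toFun w := (w.a, w.b)
  invFun p := ⟨p.1, p.2⟩
  left_inv _ := rfl
  right_inv _ := rfl

instance [Fintype F] : Fintype (Witt2 F) := Fintype.ofEquiv _ equivProd.symm

variable [Field F]

instance : Zero (Witt2 F) := ⟨⟨0, 0⟩⟩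
instance : Add (Witt2 F) := ⟨fun v w => ⟨v.a + w.a, v.b + w.b + v.a * w.a⟩⟩
instance : Neg (Witt2 F) := ⟨fun v => ⟨-v.a, -v.b + v.a * v.a⟩⟩

@[simp] lemma zero_a : (0 : Witt2 F).a = 0 := rfl
@[simp] lemma zero_b : (0 : Witt2 F).b = 0 := rfl
@[simp] lemma add_a (v w : Witt2 F) : (v + w).a = v.a + w.a := rfl
@[simp] lemma add_b (v w : Witt2 F) : (v + w).b = v.b + w.b + v.a * w.a := rfl
@[simp] lemma neg_a (v : Witt2 F) : (-v).a = -v.a := rfl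
@[simp] lemma neg_b (v : Witt2 F) : (-v).b = -v.b + v.a * v.a := rfl

instance : AddCommGroup (Witt2 F) where
  add_assoc u v w := by ext <;> simp <;> ring
  zero_add u := by ext <;> simp
  add_zero u := by ext <;> simp
  neg_add_cancel u := by ext <;> simp
  add_comm u v := by ext <;> simp <;> ring
  nsmul := nsmulRec
  zsmul := zsmulRec

end Witt2

/-- Half-trace solution: `t = c + c⁴ + c¹⁶` satisfies `t² + t = c + Tr c` with `Tr c ∈ {0, 1}`. -/
lemma exists_artinSchreier [Field F] [Fintype F] [CharP F 2] (hF : Fintype.card F = 32) (c : F) :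
    ∃ t : F, t ^ 2 + t = c ∨ t ^ 2 + t = c + 1 := by
  have h32 : c ^ 32 = c := hF ▸ FiniteField.pow_card c
  have h2 : (2 : F) = 0 := CharTwo.two_eq_zero
  set T := c + c ^ 2 + c ^ 4 + c ^ 8 + c ^ 16 with hT
  have hTT : T * (T - 1) = 0 := by
    have : T ^ 2 = c ^ 2 + c ^ 4 + c ^ 8 + c ^ 16 + c ^ 32 := by
      rw [hT]
      simp only [CharTwo.add_sq]
      ring
    rw [mul_sub, ← sq, this, h32, hT]
    ring
  have ht : (c + c ^ 4 + c ^ 16) ^ 2 + (c + c ^ 4 + c ^ 16) = c + T := by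
    simp only [CharTwo.add_sq]
    rw [hT]
    linear_combination h32
  refine ⟨c + c ^ 4 + c ^ 16, ?_⟩
  rcases mul_eq_zero.1 hTT with h | h
  · left; rw [ht, h, add_zero]
  · right; rw [ht, sub_eq_zero.1 h]

/-! ### The base configuration -/

/-- Index set of the base family: the summands index `P`, `N`, `V` and the two copies of `0`. -/
abbrev Idx (F : Type) := F ⊕ F ⊕ F ⊕ Bool

/-- The base family `P x = (1, (x, 0))`, `N x = (-1, (x, x²))`, `V b = (2, (0, b))`, and `0` twice. -/
def gen [Field F] : Idx F → ZMod 4 × Witt2 F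
  | .inl x => (1, ⟨x, 0⟩)
  | .inr (.inl x) => (-1, ⟨x, x ^ 2⟩)
  | .inr (.inr (.inl b)) => (2, ⟨0, b⟩)
  | .inr (.inr (.inr _)) => 0

/-- The direction attached to each member of the family: `(1, σ x)` for `P x` and `N x`, where
`σ` numbers the elements of `F` by `0, …, 31`, and one of the two further directions `(0, 1)`,
`(1, 32)` for the others. -/
noncomputable def dir [Field F] (σ : F → Fin 32) : Idx F → ℤ × ℤ :=
  open Classical in fun
  | .inl x => (1, (σ x : ℕ))
  | .inr (.inl x) => (1, (σ x : ℕ))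
  | .inr (.inr (.inl b)) => if b = 0 then (0, 1) else (1, 32)
  | .inr (.inr (.inr z)) => if z then (0, 1) else (1, 32)

/-- Index of the negative. -/
def negIdx : Idx F → Idx F
  | .inl x => .inr (.inl x)
  | .inr (.inl x) => .inl x
  | i => i

/-- The determinant of two directions. -/
def det (u v : ℤ × ℤ) : ℤ := u.1 * v.2 - v.1 * u.2

/-- Two directions are transversal when their determinant is nonzero and at most `32` in size. -/
def Transversal (u v : ℤ × ℤ) : Prop := det u v ≠ 0 ∧ (det u v).natAbs ≤ 32

lemma dir_negIdx [Field F] (σ : F → Fin 32) (i : Idx F) : dir σ (negIdx i) = dir σ i := by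
  rcases i with x | x | b | z <;> rfl

section Base

variable [Field F] [CharP F 2]

lemma gen_negIdx (i : Idx F) : gen (negIdx i) = -gen i := by
  rcases i with x | x | b | z
  · refine Prod.ext rfl (Witt2.ext ?_ ?_) <;> simp [gen, negIdx, CharTwo.neg_eq, sq]
  · refine Prod.ext rfl (Witt2.ext ?_ ?_) <;> simp [gen, negIdx, CharTwo.neg_eq, sq, CharTwo.add_self_eq_zero]
  · refine Prod.ext ?_ (Witt2.ext ?_ ?_)
    · show (2 : ZMod 4) = -2
      decide
    all_goals simp [gen, negIdx, CharTwo.neg_eq]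
  · simp [gen, negIdx]

/-- Every element of the base group is a sum of two members of the family with transversal
directions. -/
lemma exists_gen_add_gen [Fintype F] (hF : Fintype.card F = 32) (σ : F → Fin 32)
    (hσ : Function.Injective σ) (g : ZMod 4 × Witt2 F) :
    ∃ i j : Idx F, gen i + gen j = g ∧ Transversal (dir σ i) (dir σ j) := by
  have h2 : (2 : F) = 0 := CharTwo.two_eq_zero
  obtain ⟨k, a, b⟩ := g
  have hσσ : ∀ x y : F, x ≠ y →
      Transversal ((1, (σ x : ℕ)) : ℤ × ℤ) ((1, (σ y : ℕ)) : ℤ × ℤ) := by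
    intro x y hxy
    have h : (σ x : ℕ) ≠ σ y := fun h => hxy (hσ (Fin.ext h))
    have := (σ x).2
    have := (σ y).2
    constructor <;> simp only [det] <;> omega
  have hPV : ∀ x c : F, Transversal ((1, (σ x : ℕ)) : ℤ × ℤ)
      (dir σ (.inr (.inr (.inl c)))) := by
    intro x c
    have := (σ x).2
    simp only [dir, Transversal, det]
    split_ifs <;> constructor <;> simp only <;> omega
  have hk : k = 0 ∨ k = 1 ∨ k = 2 ∨ k = 3 := by revert k; decide
  rcases hk with rfl | rfl | rfl | rfl
  · by_cases ha : a = 0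
    · subst ha
      by_cases hb : b = 0
      · subst hb
        refine ⟨.inr (.inr (.inr true)), .inr (.inr (.inr false)), ?_, ?_⟩
        · simp only [gen, add_zero]; rfl
        · simp [dir, Transversal, det]
      · refine ⟨.inr (.inr (.inl 0)), .inr (.inr (.inl b)), ?_, ?_⟩
        · refine Prod.ext ?_ (Witt2.ext ?_ ?_)
          · show (2 + 2 : ZMod 4) = 0
            decide
          all_goals simp [gen]
        · simp [dir, Transversal, det, hb]
    · -- `P x + N y = (0, (x + y, y * (x + y)))`
      refine ⟨.inl (a + b / a), .inr (.inl (b / a)), ?_, hσσ _ _ (by simpa using ha)⟩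
      refine Prod.ext ?_ (Witt2.ext ?_ ?_)
      · show (1 + -1 : ZMod 4) = 0
        decide
      · simp only [gen, Prod.snd_add, Witt2.add_a]
        linear_combination (b / a) * h2
      · simp only [gen, Prod.snd_add, Witt2.add_b]
        field_simp
        linear_combination b ^ 2 * h2
  · refine ⟨.inr (.inl a), .inr (.inr (.inl (b + a ^ 2))), ?_, hPV _ _⟩
    refine Prod.ext ?_ (Witt2.ext ?_ ?_)
    · show (-1 + 2 : ZMod 4) = 1
      decide
    · simp [gen]
    · simp only [gen, Prod.snd_add, Witt2.add_b]
      linear_combination a ^ 2 * h2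
  · by_cases ha : a = 0
    · subst ha
      -- the copy of `0` is chosen with the direction that `V b` does not have
      have key : ∀ z, gen (.inr (.inr (.inl b))) + gen (.inr (.inr (.inr z)))
          = ((2, ⟨0, b⟩) : ZMod 4 × Witt2 F) := by
        intro z
        simp [gen]
      by_cases hb : b = 0
      · exact ⟨_, _, key false, by simp [dir, Transversal, det, hb]⟩
      · exact ⟨_, _, key true, by simp [dir, Transversal, det, hb]⟩
    · have hne : ∀ t : F, a * t ≠ a * (t + 1) := by
        intro t h
        have := mul_left_cancel₀ ha h
        simp at this
      obtain ⟨t, ht | ht⟩ := exists_artinSchreier hF (b / a ^ 2)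
      · refine ⟨.inl (a * t), .inl (a * (t + 1)), ?_, hσσ _ _ (hne t)⟩
        have hb : a ^ 2 * (t ^ 2 + t) = b := by rw [ht]; field_simp
        refine Prod.ext ?_ (Witt2.ext ?_ ?_)
        · show (1 + 1 : ZMod 4) = 2
          decide
        · simp only [gen, Prod.snd_add, Witt2.add_a]
          linear_combination (a * t) * h2
        · simp only [gen, Prod.snd_add, Witt2.add_b]
          linear_combination hb
      · refine ⟨.inr (.inl (a * t)), .inr (.inl (a * (t + 1))), ?_, hσσ _ _ (hne t)⟩
        have hb : a ^ 2 * (t ^ 2 + t) = b + a ^ 2 := by rw [ht]; field_simp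
        refine Prod.ext ?_ (Witt2.ext ?_ ?_)
        · show (-1 + -1 : ZMod 4) = 2
          decide
        · simp only [gen, Prod.snd_add, Witt2.add_a]
          linear_combination (a * t) * h2
        · simp only [gen, Prod.snd_add, Witt2.add_b]
          linear_combination hb + (a ^ 2 * t ^ 2 + a ^ 2 * t + a ^ 2) * h2
  · refine ⟨.inl a, .inr (.inr (.inl b)), ?_, hPV _ _⟩
    refine Prod.ext ?_ (Witt2.ext ?_ ?_)
    · show (1 + 2 : ZMod 4) = 3
      decide
    all_goals simp [gen]

end Base

/-! ### Lifting by lines -/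

/-- The point `(e, t • u)` of the lifted group. -/
def linePt {A : Type} (m : ℕ) (e : A) (u : ℤ × ℤ) (t : ZMod m) : A × ZMod m × ZMod m :=
  (e, t * u.1, t * u.2)

open Classical in
/-- The lifted family: the union of the lines `{e i} × (ℤ/m) • L i`. -/
noncomputable def lineSet {A I : Type} [Fintype I] (m : ℕ) [NeZero m] (e : I → A)
    (L : I → ℤ × ℤ) : Finset (A × ZMod m × ZMod m) :=
  Finset.univ.image fun p : I × ZMod m => linePt m (e p.1) (L p.1) p.2

lemma isUnit_of_mod_factorial {m : ℕ} {z : ℤ} (hz : z ≠ 0) (hz' : z.natAbs ≤ 32)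
    (hm : m ≡ 1 [MOD Nat.factorial 32]) : IsUnit (z : ZMod m) := by
  have hd : z.natAbs ∣ Nat.factorial 32 := Nat.dvd_factorial (Int.natAbs_pos.2 hz) hz'
  have hc : Nat.Coprime z.natAbs m := by
    have h1 : m ≡ 1 [MOD z.natAbs] := hm.of_dvd hd
    have := h1.gcd_eq
    rw [Nat.gcd_one_left] at this
    rwa [Nat.coprime_comm]
  have hu : IsUnit ((z.natAbs : ℕ) : ZMod m) := (ZMod.isUnit_iff_coprime _ _).2 hc
  rcases Int.natAbs_eq z with h | h
  · rw [h]; simpa using hu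
  · rw [h]; simpa using hu

section Lift

variable {A I : Type} [Fintype I] {m : ℕ} [NeZero m] {e : I → A} {L : I → ℤ × ℤ}

lemma mem_lineSet {g : A × ZMod m × ZMod m} :
    g ∈ lineSet m e L ↔ ∃ i t, linePt m (e i) (L i) t = g := by
  classical
  simp [lineSet]

lemma card_lineSet_le : (lineSet m e L).card ≤ Fintype.card I * m := by
  classical
  refine Finset.card_image_le.trans ?_
  simp [ZMod.card]

lemma neg_mem_lineSet [AddCommGroup A] {ν : I → I} (hν : ∀ i, e (ν i) = -e i)
    (hL : ∀ i, L (ν i) = L i) {g : A × ZMod m × ZMod m} (hg : g ∈ lineSet m e L) :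
    -g ∈ lineSet m e L := by
  obtain ⟨i, t, rfl⟩ := mem_lineSet.1 hg
  refine mem_lineSet.2 ⟨ν i, -t, ?_⟩
  simp [linePt, hν, hL]

/-- Cramer's rule over `ℤ/m`: two lines of unit determinant span the plane. -/
lemma exists_add_lineSet [AddCommGroup A] (hm : m ≡ 1 [MOD Nat.factorial 32])
    (h : ∀ g : A, ∃ i j, e i + e j = g ∧ Transversal (L i) (L j)) (g : A × ZMod m × ZMod m) :
    ∃ x ∈ lineSet m e L, ∃ y ∈ lineSet m e L, x + y = g := by
  obtain ⟨g, x, y⟩ := g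
  obtain ⟨i, j, hg, h0, h1⟩ := h g
  obtain ⟨w, hw⟩ := (isUnit_of_mod_factorial h0 h1 hm).exists_right_inv
  simp only [det] at hw
  push_cast at hw
  refine ⟨_, mem_lineSet.2 ⟨i, w * (x * (L j).2 - y * (L j).1), rfl⟩,
    _, mem_lineSet.2 ⟨j, w * (y * (L i).1 - x * (L i).2), rfl⟩, ?_⟩
  simp only [linePt, Prod.mk_add_mk, hg, Prod.mk.injEq, true_and]
  constructor
  · linear_combination x * hw
  · linear_combination y * hw

end Lift

/-! ### Padding the generating set -/

/-- A symmetric set missing `0` and an involution `τ` can be enlarged to a symmetric set of any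
prescribed size: sets `{g, -g}` are added while at least two elements are missing, and `τ`
supplies a last single one. -/
lemma exists_padding {A : Type} [AddCommGroup A] [Fintype A] (τ : A) (hτ : τ ≠ 0)
    (hτ2 : -τ = τ) (d : ℕ) (hd : d < Fintype.card A) (n : ℕ) :
    ∀ S : Finset A, S.card + n = d → (∀ x ∈ S, -x ∈ S) → 0 ∉ S → τ ∉ S →
      ∃ S' : Finset A, S ⊆ S' ∧ S'.card = d ∧ (∀ x ∈ S', -x ∈ S') ∧ 0 ∉ S' := by
  classical
  induction n using Nat.strong_induction_on with
  | _ n ih =>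
    intro S hS hneg h0 hτS
    rcases n with _ | _ | n
    · exact ⟨S, subset_rfl, by omega, hneg, h0⟩
    · refine ⟨insert τ S, Finset.subset_insert _ _, ?_, ?_, ?_⟩
      · rw [Finset.card_insert_of_notMem hτS]; omega
      · intro x hx
        rcases Finset.mem_insert.1 hx with rfl | hx
        · rw [hτ2]; exact hx
        · exact Finset.mem_insert_of_mem (hneg x hx)
      · simp [h0, hτ.symm]
    · obtain ⟨g, hg⟩ : ∃ g, g ∉ insert 0 (insert τ S) := by
        by_contra! hall
        have h1 : (insert 0 (insert τ S)).card = Fintype.card A := by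
          rw [Finset.eq_univ_iff_forall.2 hall, Finset.card_univ]
        have h2 := Finset.card_insert_le 0 (insert τ S)
        have h3 := Finset.card_insert_le τ S
        omega
      simp only [Finset.mem_insert, not_or] at hg
      obtain ⟨hg0, hgτ, hgS⟩ := hg
      set S₁ := insert g (insert (-g) S) with hS₁
      have hcard : S.card + 1 ≤ S₁.card ∧ S₁.card ≤ S.card + 2 := by
        have h1 : S₁.card ≤ _ := Finset.card_insert_le g (insert (-g) S)
        have h2 := Finset.card_insert_le (-g) S
        have h3 : (insert g S).card ≤ S₁.card :=
          Finset.card_le_card (Finset.insert_subset_insert _ (Finset.subset_insert _ _))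
        rw [Finset.card_insert_of_notMem hgS] at h3
        exact ⟨h3, by omega⟩
      obtain ⟨S', hsub, h⟩ := ih (d - S₁.card) (by omega) S₁ (by omega)
        (by
          intro x hx
          simp only [hS₁, Finset.mem_insert] at hx ⊢
          rcases hx with rfl | rfl | hx
          · simp
          · simp
          · exact Or.inr (Or.inr (hneg x hx)))
        (by
          simp only [hS₁, Finset.mem_insert, not_or]
          exact ⟨fun h => hg0 h.symm, fun h => hg0 (by simpa using h.symm), h0⟩)
        (by
          simp only [hS₁, Finset.mem_insert, not_or]
          exact ⟨fun h => hgτ h.symm, fun h => hgτ (by rw [← hτ2, h, neg_neg]), hτS⟩)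
      exact ⟨S', ((Finset.subset_insert _ _).trans (Finset.subset_insert _ _)).trans hsub, h⟩

/-- The construction for a single modulus `m ≡ 1 mod 32!`, written additively. -/
lemma exists_additive (m d : ℕ) [NeZero m] (hm : m ≡ 1 [MOD Nat.factorial 32])
    (hd : 98 * m ≤ d) (hd' : d < 4096 * m ^ 2) :
    ∃ (A : Type) (_ : AddCommGroup A) (_ : Fintype A) (S : Finset A),
      Fintype.card A = 4096 * m ^ 2 ∧ (∀ x ∈ S, -x ∈ S) ∧ 0 ∉ S ∧ S.card = d ∧
      ∀ g : A, ∃ x y, (x = 0 ∨ x ∈ S) ∧ (y = 0 ∨ y ∈ S) ∧ x + y = g := by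
  classical
  let F := GaloisField 2 5
  have : Fintype F := Fintype.ofFinite F
  have hF : Fintype.card F = 32 := by
    rw [← Nat.card_eq_fintype_card, GaloisField.card 2 5 (by norm_num)]; norm_num
  let σ : F ≃ Fin 32 := Fintype.equivFinOfCardEq hF
  let A := (ZMod 4 × Witt2 F) × ZMod m × ZMod m
  have hA : Fintype.card A = 4096 * m ^ 2 := by
    have hW : Fintype.card (Witt2 F) = 1024 := by
      rw [Fintype.card_congr Witt2.equivProd, Fintype.card_prod, hF]
    simp only [A, Fintype.card_prod, ZMod.card, hW]
    ring
  let S₀ : Finset A := lineSet m gen (dir σ)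
  have hS₀ : S₀.card ≤ d := by
    refine (card_lineSet_le.trans ?_).trans hd
    simp [Fintype.card_sum, hF]
  have hneg : ∀ x ∈ S₀, -x ∈ S₀ := fun x hx => neg_mem_lineSet gen_negIdx (dir_negIdx σ) hx
  let τ : A := ((0, ⟨0, 1⟩), 0, 0)
  have hτ : τ ≠ 0 := by
    intro h
    have : (1 : F) = 0 := congrArg (fun x : A => x.1.2.b) h
    exact one_ne_zero this
  have hτ2 : -τ = τ := by
    have hW : -(⟨0, 1⟩ : Witt2 F) = ⟨0, 1⟩ := by
      ext <;> simp [CharTwo.neg_eq]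
    show ((-0, -⟨0, 1⟩), -0, -0) = τ
    rw [hW, neg_zero, neg_zero]
  have hτS : τ ∉ S₀ := by
    intro h
    obtain ⟨i, t, hi⟩ := mem_lineSet.1 h
    have h1 : (gen i).1 = 0 := congrArg (fun x : A => x.1.1) hi
    have h2 : (gen i).2.b = 1 := congrArg (fun x : A => x.1.2.b) hi
    rcases i with x | x | b | z
    · exact absurd h1 (by simp only [gen]; decide)
    · exact absurd h1 (by simp only [gen]; decide)
    · exact absurd h1 (by simp only [gen]; decide)
    · simp [gen] at h2
  have hcard := Finset.card_erase_le (s := S₀) (a := 0)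
  obtain ⟨S, hsub, hSd, hSneg, hS0⟩ := exists_padding τ hτ hτ2 d (hA ▸ hd')
    (d - (S₀.erase 0).card) (S₀.erase 0) (by omega)
    (fun x hx => Finset.mem_erase.2
      ⟨neg_ne_zero.2 (Finset.mem_erase.1 hx).1, hneg x (Finset.mem_erase.1 hx).2⟩)
    (by simp) (fun h => hτS (Finset.mem_erase.1 h).2)
  refine ⟨A, inferInstance, inferInstance, S, hA, hSneg, hS0, hSd, fun g => ?_⟩
  obtain ⟨x, hx, y, hy, hxy⟩ :=
    exists_add_lineSet hm (exists_gen_add_gen hF σ σ.injective) g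
  have hmem : ∀ z ∈ S₀, z = 0 ∨ z ∈ S := fun z hz =>
    or_iff_not_imp_left.2 fun h => hsub (Finset.mem_erase.2 ⟨h, hz⟩)
  exact ⟨x, y, hmem x hx, hmem y hy, hxy⟩

/-- Numbers `m ≡ 1 mod M` have bounded gaps, so one lies between `5d/512` and `d/98`; the lower
end makes `4096 m² ≥ (25/64) d²`. -/
lemma exists_modulus (M : ℕ) (hM : 0 < M) (d : ℕ) (hd : 100000 * (M + 1) ≤ d) :
    ∃ m : ℕ, 0 < m ∧ m ≡ 1 [MOD M] ∧ 98 * m ≤ d ∧ 5 * d ≤ 512 * m := by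
  refine ⟨M * ((d / 98 - 1) / M) + 1, by omega, ?_, ?_, ?_⟩
  · simp [Nat.ModEq]
  · have := Nat.mul_div_le (d / 98 - 1) M
    omega
  · have h1 := Nat.lt_mul_div_succ (d / 98 - 1) hM
    rw [Nat.mul_add, mul_one] at h1
    omega

end AbelianCayley

/-- For all sufficiently large integers `d` there exist a finite abelian
group `G` with `|G| ≥ (25/64)d² − 2.1·d^{1.525}` and a subset `S ⊆ G` with `S = S⁻¹`,
`1 ∉ S`, `|S| = d`, such that every element of `G` is a product of at most two elements of
`S`; in other words `AC(d,2) ≥ (25/64)d² − 2.1·d^{1.525}` for all sufficiently large `d`. -/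
theorem AC_d_2_lower_bound :
    ∃ d₀ : ℕ, ∀ d : ℕ, d₀ ≤ d →
      ∃ (G : Type) (_ : CommGroup G) (_ : Fintype G) (S : Finset G),
        (Fintype.card G : ℝ) ≥ 25 / 64 * (d : ℝ) ^ 2 - 2.1 * (d : ℝ) ^ (1.525 : ℝ) ∧
        (↑S : Set G)⁻¹ = ↑S ∧
        (1 : G) ∉ S ∧
        S.card = d ∧
        (∀ g : G, ∃ l : List G, l.length ≤ 2 ∧ (∀ x ∈ l, x ∈ S) ∧ l.prod = g) := by
  have hMpos := Nat.factorial_pos 32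
  obtain ⟨M, hM⟩ : ∃ M, M = Nat.factorial 32 := ⟨_, rfl⟩
  rw [← hM] at hMpos
  refine ⟨100000 * (M + 1), fun d hd => ?_⟩
  obtain ⟨m, hm0, hm1, hm2, hm3⟩ := AbelianCayley.exists_modulus M hMpos d hd
  have : NeZero m := ⟨hm0.ne'⟩
  have hd' : d < 4096 * m ^ 2 := by nlinarith
  obtain ⟨A, _, _, S, hA, hneg, h0, hS, hcov⟩ :=
    AbelianCayley.exists_additive m d (hM ▸ hm1) hm2 hd'
  refine ⟨Multiplicative A, inferInstance, inferInstance,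
    S.map Multiplicative.ofAdd.toEmbedding, ?_, ?_, ?_, ?_, ?_⟩
  · have hc : (Fintype.card (Multiplicative A) : ℝ) = 4096 * (m : ℝ) ^ 2 := by
      rw [Fintype.card_multiplicative, hA]; push_cast; ring
    have h3 : (5 : ℝ) * d ≤ 512 * m := by exact_mod_cast hm3
    have hpow : (0 : ℝ) ≤ (d : ℝ) ^ (1.525 : ℝ) := by positivity
    have hd0 : (0 : ℝ) ≤ d := by positivity
    rw [hc]
    nlinarith
  · ext x
    constructor
    · intro hx
      have hx' : x⁻¹.toAdd ∈ S := by simpa using hx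
      have := hneg _ hx'
      simpa using this
    · intro hx
      have hx' : x.toAdd ∈ S := by simpa using hx
      have := hneg _ hx'
      simpa using this
  · simpa using h0
  · simpa using hS
  · intro g
    obtain ⟨x, y, hx, hy, hxy⟩ := hcov g.toAdd
    have hg : Multiplicative.ofAdd x * Multiplicative.ofAdd y = g := by
      rw [← ofAdd_add, hxy, ofAdd_toAdd]
    -- summands equal to the identity are dropped from the word
    rcases hx with rfl | hx <;> rcases hy with rfl | hy
    · exact ⟨[], by simp, by simp, by simpa using hg⟩
    · exact ⟨[Multiplicative.ofAdd y], by simp, by simpa using hy, by simpa using hg⟩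
    · exact ⟨[Multiplicative.ofAdd x], by simp, by simpa using hx, by simpa using hg⟩
    · exact ⟨[Multiplicative.ofAdd x, Multiplicative.ofAdd y], by simp,
        by simp [hx, hy], by simpa using hg⟩
end
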